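/- Suppose (θ1,…,θ8) ∈ [0,π/2]⁸ satisfies the equilibrium system. If θi > 0 for some i ∈ {1,…,8}, then θj > 0 for all j ∈ {1,…,8}. -/

import Mathlib

/-!
Write `Pᵢ` for `0 < θᵢ`. Since `f` is positive almost everywhere on the square and `Rᵢ(θ)` contains
an open rectangle of the square as soon as `θ > 0`, the property `Pᵢ` forces `0 < Iᵢ(θᵢ)`; all `Iᵢ`
are nonnegative, and the weights `K₁, K₂, L₁, L₂` are positive because half-squares have positive
mass. An equation with positive numerator then has a positive angle as its solution, whether its
denominator vanishes or not, so the system yields the implications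

* `P₆ ∨ P₇ → P₁ ∧ P₄` and `P₅ ∨ P₈ → P₂ ∧ P₃`,
* `P₃ ∨ P₄ → P₅ ∧ P₆` and `P₁ ∨ P₂ → P₇ ∧ P₈`.

Any single `Pᵢ` generates all eight under these implications: for instance
`P₁ → P₇ ∧ P₈ → P₂ ∧ P₃ ∧ P₄ → P₅ ∧ P₆`. Equations of the form `0 / 0` play no role.
-/

open MeasureTheory Real Set

noncomputable section

/-- The square `[-1,1]²`. -/
def Sq : Set (ℝ × ℝ) := Set.Icc (-1 : ℝ) 1 ×ˢ Set.Icc (-1 : ℝ) 1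

/-- A probability density supported on `[-1,1]²`, continuous and positive
almost everywhere on the square. -/
structure IsNiceDensity (f : ℝ × ℝ → ℝ) : Prop where
  nonneg : ∀ p, 0 ≤ f p
  vanish : ∀ p ∉ Sq, f p = 0
  total : (∫ p in Sq, f p) = 1
  cont : ContinuousOn f Sq
  pos_ae : ∀ᵐ p ∂(volume.restrict Sq), 0 < f p

/-- Region `R1(θ) = {0 < x ≤ 1, 0 < y < x·tan θ}`; for `θ = π/2` it is the full
open quadrant. -/
def R1 (θ : ℝ) : Set (ℝ × ℝ) :=
  {p | 0 < p.1 ∧ p.1 ≤ 1 ∧ 0 < p.2 ∧ (θ = π / 2 ∨ p.2 < p.1 * tan θ)}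

def R2 (θ : ℝ) : Set (ℝ × ℝ) :=
  {p | -1 ≤ p.1 ∧ p.1 < 0 ∧ 0 < p.2 ∧ (θ = π / 2 ∨ p.2 < -p.1 * tan θ)}

def R3 (θ : ℝ) : Set (ℝ × ℝ) :=
  {p | -1 ≤ p.1 ∧ p.1 < 0 ∧ 0 < -p.2 ∧ (θ = π / 2 ∨ -p.2 < -p.1 * tan θ)}

def R4 (θ : ℝ) : Set (ℝ × ℝ) :=
  {p | 0 < p.1 ∧ p.1 ≤ 1 ∧ 0 < -p.2 ∧ (θ = π / 2 ∨ -p.2 < p.1 * tan θ)}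

def R5 (θ : ℝ) : Set (ℝ × ℝ) :=
  {p | 0 < p.2 ∧ p.2 ≤ 1 ∧ 0 < p.1 ∧ (θ = π / 2 ∨ p.1 < p.2 * tan θ)}

def R6 (θ : ℝ) : Set (ℝ × ℝ) :=
  {p | 0 < p.2 ∧ p.2 ≤ 1 ∧ 0 < -p.1 ∧ (θ = π / 2 ∨ -p.1 < p.2 * tan θ)}

def R7 (θ : ℝ) : Set (ℝ × ℝ) :=
  {p | -1 ≤ p.2 ∧ p.2 < 0 ∧ 0 < -p.1 ∧ (θ = π / 2 ∨ -p.1 < -p.2 * tan θ)}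

def R8 (θ : ℝ) : Set (ℝ × ℝ) :=
  {p | -1 ≤ p.2 ∧ p.2 < 0 ∧ 0 < p.1 ∧ (θ = π / 2 ∨ p.1 < -p.2 * tan θ)}

def I1 (f : ℝ × ℝ → ℝ) (θ : ℝ) : ℝ := ∫ p in R1 θ, f p
def I2 (f : ℝ × ℝ → ℝ) (θ : ℝ) : ℝ := ∫ p in R2 θ, f p
def I3 (f : ℝ × ℝ → ℝ) (θ : ℝ) : ℝ := ∫ p in R3 θ, f p
def I4 (f : ℝ × ℝ → ℝ) (θ : ℝ) : ℝ := ∫ p in R4 θ, f p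
def I5 (f : ℝ × ℝ → ℝ) (θ : ℝ) : ℝ := ∫ p in R5 θ, f p
def I6 (f : ℝ × ℝ → ℝ) (θ : ℝ) : ℝ := ∫ p in R6 θ, f p
def I7 (f : ℝ × ℝ → ℝ) (θ : ℝ) : ℝ := ∫ p in R7 θ, f p
def I8 (f : ℝ × ℝ → ℝ) (θ : ℝ) : ℝ := ∫ p in R8 θ, f p

def Q1p (f : ℝ × ℝ → ℝ) : ℝ := ∫ p in {p ∈ Sq | 0 < p.1}, f p
def Q1m (f : ℝ × ℝ → ℝ) : ℝ := ∫ p in {p ∈ Sq | p.1 < 0}, f p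
def Q2p (f : ℝ × ℝ → ℝ) : ℝ := ∫ p in {p ∈ Sq | 0 < p.2}, f p
def Q2m (f : ℝ × ℝ → ℝ) : ℝ := ∫ p in {p ∈ Sq | p.2 < 0}, f p

def K1 (f : ℝ × ℝ → ℝ) (n : ℕ) : ℝ := Q1m f ^ ((n - 1) / 2) * Q1p f ^ ((n - 3) / 2)
def K2 (f : ℝ × ℝ → ℝ) (n : ℕ) : ℝ := Q1m f ^ ((n - 3) / 2) * Q1p f ^ ((n - 1) / 2)
def L1 (f : ℝ × ℝ → ℝ) (n : ℕ) : ℝ := Q2m f ^ ((n - 3) / 2) * Q2p f ^ ((n - 1) / 2)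
def L2 (f : ℝ × ℝ → ℝ) (n : ℕ) : ℝ := Q2m f ^ ((n - 1) / 2) * Q2p f ^ ((n - 3) / 2)

/-- One equation of the equilibrium system: if the denominator is nonzero then
`θ = arctan (num / den)`; if the denominator is zero and the numerator positive then
`θ = π/2`; if both vanish, no constraint is imposed. -/
def EqnHolds (θ num den : ℝ) : Prop :=
  if den = 0 then (num = 0 ∨ θ = π / 2) else θ = arctan (num / den)

/-- The equilibrium system of the vote-trading game. -/
def EqSys (f : ℝ × ℝ → ℝ) (n : ℕ) (θ1 θ2 θ3 θ4 θ5 θ6 θ7 θ8 : ℝ) : Prop :=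
  EqnHolds θ1 ((I6 f θ6 + I7 f θ7) * K1 f n) ((I7 f θ7 + I8 f θ8) * L1 f n) ∧
  EqnHolds θ2 ((I5 f θ5 + I8 f θ8) * K2 f n) ((I7 f θ7 + I8 f θ8) * L1 f n) ∧
  EqnHolds θ3 ((I5 f θ5 + I8 f θ8) * K2 f n) ((I5 f θ5 + I6 f θ6) * L2 f n) ∧
  EqnHolds θ4 ((I6 f θ6 + I7 f θ7) * K1 f n) ((I5 f θ5 + I6 f θ6) * L2 f n) ∧
  EqnHolds θ5 ((I3 f θ3 + I4 f θ4) * L2 f n) ((I2 f θ2 + I3 f θ3) * K2 f n) ∧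
  EqnHolds θ6 ((I3 f θ3 + I4 f θ4) * L2 f n) ((I1 f θ1 + I4 f θ4) * K1 f n) ∧
  EqnHolds θ7 ((I1 f θ1 + I2 f θ2) * L1 f n) ((I1 f θ1 + I4 f θ4) * K1 f n) ∧
  EqnHolds θ8 ((I1 f θ1 + I2 f θ2) * L1 f n) ((I2 f θ2 + I3 f θ3) * K2 f n)

lemma IsNiceDensity.integrable {f : ℝ × ℝ → ℝ} (hf : IsNiceDensity f) : Integrable f := by
  have hc : IsCompact Sq := isCompact_Icc.prod isCompact_Icc
  rw [← integrableOn_iff_integrable_of_support_subset (s := Sq)]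
  · exact hf.cont.integrableOn_compact hc
  · intro p hp
    by_contra h
    exact hp (hf.vanish p h)

/-- A set has positive mass once it contains a nondegenerate open rectangle of the square. No
measurability of the set is needed. -/
lemma IsNiceDensity.setIntegral_pos {f : ℝ × ℝ → ℝ} (hf : IsNiceDensity f) {S : Set (ℝ × ℝ)}
    (a b c d : ℝ) (hab : a < b) (hcd : c < d) (ha : -1 ≤ a) (hb : b ≤ 1) (hc : -1 ≤ c)
    (hd : d ≤ 1) (hS : ∀ x y, a < x → x < b → c < y → y < d → (x, y) ∈ S) :
    0 < ∫ p in S, f p := by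
  set U : Set (ℝ × ℝ) := Ioo a b ×ˢ Ioo c d with hU
  have hUS : U ⊆ S := fun p hp => hS p.1 p.2 hp.1.1 hp.1.2 hp.2.1 hp.2.2
  have hUSq : U ⊆ Sq := fun p hp =>
    ⟨⟨ha.trans hp.1.1.le, hp.1.2.le.trans hb⟩, ⟨hc.trans hp.2.1.le, hp.2.2.le.trans hd⟩⟩
  have hmono : ∫ p in U, f p ≤ ∫ p in S, f p :=
    setIntegral_mono_set hf.integrable.integrableOn (ae_of_all _ hf.nonneg)
      (Filter.Eventually.of_forall hUS)
  refine lt_of_lt_of_le ?_ hmono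
  refine lt_of_le_of_ne (integral_nonneg hf.nonneg) fun h0 => ?_
  have hz := (integral_eq_zero_iff_of_nonneg hf.nonneg hf.integrable.integrableOn).1 h0.symm
  have hp := ae_restrict_of_ae_restrict_of_subset hUSq hf.pos_ae
  -- On `U` the density is almost everywhere both zero and positive, so the open set `U` is null.
  have hF : ∀ᵐ p ∂(volume.restrict U), False := by
    filter_upwards [hz, hp] with p h1 h2
    exact h2.ne' h1
  have hnull : volume U = 0 := by
    simpa [ae_iff] using hF
  have hopen : IsOpen U := isOpen_Ioo.prod isOpen_Ioo
  have hne : U.Nonempty := (nonempty_Ioo.2 hab).prod (nonempty_Ioo.2 hcd)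
  exact (hopen.measure_pos volume hne).ne' hnull

/-- A cone of positive opening angle contains the rectangle `(1/2, 1) × (0, s)` for some `s`. -/
lemma exists_rect_height {θ : ℝ} (h0 : 0 < θ) (h : θ ∈ Set.Icc (0 : ℝ) (π / 2)) :
    ∃ s : ℝ, 0 < s ∧ s ≤ 1 ∧ ∀ u v : ℝ, 1 / 2 < u → v < s → θ = π / 2 ∨ v < u * tan θ := by
  rcases eq_or_lt_of_le h.2 with he | hlt
  · exact ⟨1, one_pos, le_rfl, fun _ _ _ _ => Or.inl he⟩
  · have ht : 0 < tan θ := tan_pos_of_pos_of_lt_pi_div_two h0 hlt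
    refine ⟨min 1 (tan θ / 2), by positivity, min_le_left _ _, fun u v hu hv => Or.inr ?_⟩
    have := hv.trans_le (min_le_right _ _)
    nlinarith

lemma I1_pos {f : ℝ × ℝ → ℝ} (hf : IsNiceDensity f) {θ : ℝ}
    (h : θ ∈ Set.Icc (0 : ℝ) (π / 2)) (h0 : 0 < θ) : 0 < I1 f θ := by
  obtain ⟨s, hs0, hs1, hs⟩ := exists_rect_height h0 h
  refine hf.setIntegral_pos (1 / 2) 1 0 s (by linarith) (by linarith) (by linarith)
    (by linarith) (by linarith) (by linarith) fun x y hx hx' hy hy' => ?_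
  exact ⟨by linarith, by linarith, by linarith, hs x y (by linarith) (by linarith)⟩

lemma I2_pos {f : ℝ × ℝ → ℝ} (hf : IsNiceDensity f) {θ : ℝ}
    (h : θ ∈ Set.Icc (0 : ℝ) (π / 2)) (h0 : 0 < θ) : 0 < I2 f θ := by
  obtain ⟨s, hs0, hs1, hs⟩ := exists_rect_height h0 h
  refine hf.setIntegral_pos (-1) (-1 / 2) 0 s (by linarith) (by linarith) (by linarith)
    (by linarith) (by linarith) (by linarith) fun x y hx hx' hy hy' => ?_
  exact ⟨by linarith, by linarith, by linarith, hs (-x) y (by linarith) (by linarith)⟩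

lemma I3_pos {f : ℝ × ℝ → ℝ} (hf : IsNiceDensity f) {θ : ℝ}
    (h : θ ∈ Set.Icc (0 : ℝ) (π / 2)) (h0 : 0 < θ) : 0 < I3 f θ := by
  obtain ⟨s, hs0, hs1, hs⟩ := exists_rect_height h0 h
  refine hf.setIntegral_pos (-1) (-1 / 2) (-s) 0 (by linarith) (by linarith) (by linarith)
    (by linarith) (by linarith) (by linarith) fun x y hx hx' hy hy' => ?_
  exact ⟨by linarith, by linarith, by linarith, hs (-x) (-y) (by linarith) (by linarith)⟩

lemma I4_pos {f : ℝ × ℝ → ℝ} (hf : IsNiceDensity f) {θ : ℝ}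
    (h : θ ∈ Set.Icc (0 : ℝ) (π / 2)) (h0 : 0 < θ) : 0 < I4 f θ := by
  obtain ⟨s, hs0, hs1, hs⟩ := exists_rect_height h0 h
  refine hf.setIntegral_pos (1 / 2) 1 (-s) 0 (by linarith) (by linarith) (by linarith)
    (by linarith) (by linarith) (by linarith) fun x y hx hx' hy hy' => ?_
  exact ⟨by linarith, by linarith, by linarith, hs x (-y) (by linarith) (by linarith)⟩

lemma I5_pos {f : ℝ × ℝ → ℝ} (hf : IsNiceDensity f) {θ : ℝ}
    (h : θ ∈ Set.Icc (0 : ℝ) (π / 2)) (h0 : 0 < θ) : 0 < I5 f θ := by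
  obtain ⟨s, hs0, hs1, hs⟩ := exists_rect_height h0 h
  refine hf.setIntegral_pos 0 s (1 / 2) 1 (by linarith) (by linarith) (by linarith)
    (by linarith) (by linarith) (by linarith) fun x y hx hx' hy hy' => ?_
  exact ⟨by linarith, by linarith, by linarith, hs y x (by linarith) (by linarith)⟩

lemma I6_pos {f : ℝ × ℝ → ℝ} (hf : IsNiceDensity f) {θ : ℝ}
    (h : θ ∈ Set.Icc (0 : ℝ) (π / 2)) (h0 : 0 < θ) : 0 < I6 f θ := by
  obtain ⟨s, hs0, hs1, hs⟩ := exists_rect_height h0 h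
  refine hf.setIntegral_pos (-s) 0 (1 / 2) 1 (by linarith) (by linarith) (by linarith)
    (by linarith) (by linarith) (by linarith) fun x y hx hx' hy hy' => ?_
  exact ⟨by linarith, by linarith, by linarith, hs y (-x) (by linarith) (by linarith)⟩

lemma I7_pos {f : ℝ × ℝ → ℝ} (hf : IsNiceDensity f) {θ : ℝ}
    (h : θ ∈ Set.Icc (0 : ℝ) (π / 2)) (h0 : 0 < θ) : 0 < I7 f θ := by
  obtain ⟨s, hs0, hs1, hs⟩ := exists_rect_height h0 h
  refine hf.setIntegral_pos (-s) 0 (-1) (-1 / 2) (by linarith) (by linarith) (by linarith)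
    (by linarith) (by linarith) (by linarith) fun x y hx hx' hy hy' => ?_
  exact ⟨by linarith, by linarith, by linarith, hs (-y) (-x) (by linarith) (by linarith)⟩

lemma I8_pos {f : ℝ × ℝ → ℝ} (hf : IsNiceDensity f) {θ : ℝ}
    (h : θ ∈ Set.Icc (0 : ℝ) (π / 2)) (h0 : 0 < θ) : 0 < I8 f θ := by
  obtain ⟨s, hs0, hs1, hs⟩ := exists_rect_height h0 h
  refine hf.setIntegral_pos 0 s (-1) (-1 / 2) (by linarith) (by linarith) (by linarith)
    (by linarith) (by linarith) (by linarith) fun x y hx hx' hy hy' => ?_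
  exact ⟨by linarith, by linarith, by linarith, hs (-y) x (by linarith) (by linarith)⟩

lemma Q1p_pos {f : ℝ × ℝ → ℝ} (hf : IsNiceDensity f) : 0 < Q1p f := by
  refine hf.setIntegral_pos 0 1 (-1) 1 (by norm_num) (by norm_num) (by norm_num) (by norm_num)
    (by norm_num) (by norm_num) fun x y hx hx' hy hy' => ?_
  exact ⟨⟨⟨by linarith, by linarith⟩, ⟨by linarith, by linarith⟩⟩, hx⟩

lemma Q1m_pos {f : ℝ × ℝ → ℝ} (hf : IsNiceDensity f) : 0 < Q1m f := by
  refine hf.setIntegral_pos (-1) 0 (-1) 1 (by norm_num) (by norm_num) (by norm_num) (by norm_num)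
    (by norm_num) (by norm_num) fun x y hx hx' hy hy' => ?_
  exact ⟨⟨⟨by linarith, by linarith⟩, ⟨by linarith, by linarith⟩⟩, hx'⟩

lemma Q2p_pos {f : ℝ × ℝ → ℝ} (hf : IsNiceDensity f) : 0 < Q2p f := by
  refine hf.setIntegral_pos (-1) 1 0 1 (by norm_num) (by norm_num) (by norm_num) (by norm_num)
    (by norm_num) (by norm_num) fun x y hx hx' hy hy' => ?_
  exact ⟨⟨⟨by linarith, by linarith⟩, ⟨by linarith, by linarith⟩⟩, hy⟩

lemma Q2m_pos {f : ℝ × ℝ → ℝ} (hf : IsNiceDensity f) : 0 < Q2m f := by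
  refine hf.setIntegral_pos (-1) 1 (-1) 0 (by norm_num) (by norm_num) (by norm_num) (by norm_num)
    (by norm_num) (by norm_num) fun x y hx hx' hy hy' => ?_
  exact ⟨⟨⟨by linarith, by linarith⟩, ⟨by linarith, by linarith⟩⟩, hy'⟩

/-- An equation with positive numerator has only positive solutions; for zero denominator the
solution is `π / 2`. -/
lemma EqnHolds.pos {θ num den : ℝ} (h : EqnHolds θ num den) (hnum : 0 < num) (hden : 0 ≤ den) :
    0 < θ := by
  unfold EqnHolds at h
  split_ifs at h with hd
  · rcases h with h | h
    · exact absurd h hnum.ne'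
    · rw [h]; positivity
  · rw [h, arctan_pos]
    exact div_pos hnum (lt_of_le_of_ne hden (Ne.symm hd))

/-- The form in which the equations occur: numerator `(A + B) * K`, denominator `(C + D) * L`. -/
lemma EqnHolds.pos_of_or {θ A B C D K L : ℝ} (h : EqnHolds θ ((A + B) * K) ((C + D) * L))
    (hA : 0 ≤ A) (hB : 0 ≤ B) (hC : 0 ≤ C) (hD : 0 ≤ D) (hK : 0 < K) (hL : 0 < L)
    (hAB : 0 < A ∨ 0 < B) : 0 < θ := by
  refine h.pos (mul_pos ?_ hK) (by positivity)
  rcases hAB with h | h <;> linarith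

/-- If `(θ1,…,θ8) ∈ [0,π/2]⁸` satisfies the equilibrium system
and some `θᵢ` is positive, then all of them are positive. -/
theorem all_pos_of_some_pos (n : ℕ) (hodd : Odd n) (hn : 3 ≤ n)
    (f : ℝ × ℝ → ℝ) (hf : IsNiceDensity f)
    (θ1 θ2 θ3 θ4 θ5 θ6 θ7 θ8 : ℝ)
    (h1 : θ1 ∈ Set.Icc (0 : ℝ) (π / 2)) (h2 : θ2 ∈ Set.Icc (0 : ℝ) (π / 2))
    (h3 : θ3 ∈ Set.Icc (0 : ℝ) (π / 2)) (h4 : θ4 ∈ Set.Icc (0 : ℝ) (π / 2))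
    (h5 : θ5 ∈ Set.Icc (0 : ℝ) (π / 2)) (h6 : θ6 ∈ Set.Icc (0 : ℝ) (π / 2))
    (h7 : θ7 ∈ Set.Icc (0 : ℝ) (π / 2)) (h8 : θ8 ∈ Set.Icc (0 : ℝ) (π / 2))
    (heq : EqSys f n θ1 θ2 θ3 θ4 θ5 θ6 θ7 θ8)
    (hpos : 0 < θ1 ∨ 0 < θ2 ∨ 0 < θ3 ∨ 0 < θ4 ∨ 0 < θ5 ∨ 0 < θ6 ∨ 0 < θ7 ∨ 0 < θ8) :
    0 < θ1 ∧ 0 < θ2 ∧ 0 < θ3 ∧ 0 < θ4 ∧ 0 < θ5 ∧ 0 < θ6 ∧ 0 < θ7 ∧ 0 < θ8 := by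
  have q1p := Q1p_pos hf
  have q1m := Q1m_pos hf
  have q2p := Q2p_pos hf
  have q2m := Q2m_pos hf
  have k1 : 0 < K1 f n := by unfold K1; positivity
  have k2 : 0 < K2 f n := by unfold K2; positivity
  have l1 : 0 < L1 f n := by unfold L1; positivity
  have l2 : 0 < L2 f n := by unfold L2; positivity
  have n1 : 0 ≤ I1 f θ1 := integral_nonneg hf.nonneg
  have p1 : 0 < θ1 → 0 < I1 f θ1 := I1_pos hf h1
  have n2 : 0 ≤ I2 f θ2 := integral_nonneg hf.nonneg
  have p2 : 0 < θ2 → 0 < I2 f θ2 := I2_pos hf h2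
  have n3 : 0 ≤ I3 f θ3 := integral_nonneg hf.nonneg
  have p3 : 0 < θ3 → 0 < I3 f θ3 := I3_pos hf h3
  have n4 : 0 ≤ I4 f θ4 := integral_nonneg hf.nonneg
  have p4 : 0 < θ4 → 0 < I4 f θ4 := I4_pos hf h4
  have n5 : 0 ≤ I5 f θ5 := integral_nonneg hf.nonneg
  have p5 : 0 < θ5 → 0 < I5 f θ5 := I5_pos hf h5
  have n6 : 0 ≤ I6 f θ6 := integral_nonneg hf.nonneg
  have p6 : 0 < θ6 → 0 < I6 f θ6 := I6_pos hf h6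
  have n7 : 0 ≤ I7 f θ7 := integral_nonneg hf.nonneg
  have p7 : 0 < θ7 → 0 < I7 f θ7 := I7_pos hf h7
  have n8 : 0 ≤ I8 f θ8 := integral_nonneg hf.nonneg
  have p8 : 0 < θ8 → 0 < I8 f θ8 := I8_pos hf h8
  obtain ⟨e1, e2, e3, e4, e5, e6, e7, e8⟩ := heq
  have c1 : 0 < θ6 ∨ 0 < θ7 → 0 < θ1 := fun h =>
    e1.pos_of_or n6 n7 n7 n8 k1 l1 (h.imp p6 p7)
  have c2 : 0 < θ5 ∨ 0 < θ8 → 0 < θ2 := fun h =>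
    e2.pos_of_or n5 n8 n7 n8 k2 l1 (h.imp p5 p8)
  have c3 : 0 < θ5 ∨ 0 < θ8 → 0 < θ3 := fun h =>
    e3.pos_of_or n5 n8 n5 n6 k2 l2 (h.imp p5 p8)
  have c4 : 0 < θ6 ∨ 0 < θ7 → 0 < θ4 := fun h =>
    e4.pos_of_or n6 n7 n5 n6 k1 l2 (h.imp p6 p7)
  have c5 : 0 < θ3 ∨ 0 < θ4 → 0 < θ5 := fun h =>
    e5.pos_of_or n3 n4 n2 n3 l2 k2 (h.imp p3 p4)
  have c6 : 0 < θ3 ∨ 0 < θ4 → 0 < θ6 := fun h =>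
    e6.pos_of_or n3 n4 n1 n4 l2 k1 (h.imp p3 p4)
  have c7 : 0 < θ1 ∨ 0 < θ2 → 0 < θ7 := fun h =>
    e7.pos_of_or n1 n2 n1 n4 l1 k1 (h.imp p1 p2)
  have c8 : 0 < θ1 ∨ 0 < θ2 → 0 < θ8 := fun h =>
    e8.pos_of_or n1 n2 n2 n3 l1 k2 (h.imp p1 p2)
  -- It suffices to have `θ1` or `θ2` positive, and every other angle leads to one of these.
  suffices h : 0 < θ1 ∨ 0 < θ2 by
    have t7 := c7 h
    have t8 := c8 h
    have t3 := c3 (Or.inr t8)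
    exact ⟨c1 (Or.inr t7), c2 (Or.inr t8), t3, c4 (Or.inr t7), c5 (Or.inl t3), c6 (Or.inl t3),
      t7, t8⟩
  rcases hpos with h | h | h | h | h | h | h | h
  · exact Or.inl h
  · exact Or.inr h
  · exact Or.inr (c2 (Or.inl (c5 (Or.inl h))))
  · exact Or.inr (c2 (Or.inl (c5 (Or.inr h))))
  · exact Or.inr (c2 (Or.inl h))
  · exact Or.inl (c1 (Or.inl h))
  · exact Or.inl (c1 (Or.inr h))
  · exact Or.inr (c2 (Or.inr h))
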